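/- Let A = (a_{ij}) be an n×n real matrix with a_{i,i+1} > 0 for 1 ≤ i ≤ n−1, a_{i,i−2} > 0 for 3 ≤ i ≤ n, and all other entries zero. Then the characteristic polynomial of A has the form λ^k · P(λ³) where k ∈ {0,1,2} and P is a real polynomial all of whose roots are positive and simple. In particular, all nonzero eigenvalues of A are simple and have arguments of the form 2πk/3 with k ∈ {0,1,2}. -/

import Mathlib

open Polynomial

namespace Tar

/-- Three-step recurrence satisfied by the characteristic polynomials. -/
structure Rec (p : ℕ → ℝ[X]) (b : ℕ → ℝ) : Prop where
  pos : ∀ m, 0 < b m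
  h0 : p 0 = 1
  h1 : p 1 = X
  h2 : p 2 = X ^ 2
  h3 : ∀ m, p (m + 3) = X * p (m + 2) - C (b m) * p m

theorem exists_comp {p : ℕ → ℝ[X]} {b : ℕ → ℝ} (H : Rec p b) (m : ℕ) :
    ∃ f g h : ℝ[X], p (3 * m) = f.comp (X ^ 3) ∧ p (3 * m + 1) = X * g.comp (X ^ 3) ∧
      p (3 * m + 2) = X ^ 2 * h.comp (X ^ 3) ∧ 0 < (-1) ^ m * f.eval 0 ∧
      0 < (-1) ^ m * g.eval 0 ∧ 0 < (-1) ^ m * h.eval 0 := by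
  induction m with
  | zero => exact ⟨1, 1, 1, by simp [H.h0], by simp [H.h1], by simp [H.h2], by simp, by simp, by simp⟩
  | succ m ih =>
    obtain ⟨f, g, h, hf, hg, hh, pf, pg, ph⟩ := ih
    have e1 : p (3 * m + 3) = (X * h - C (b (3 * m)) * f).comp (X ^ 3) := by
      rw [H.h3, hh, hf]; simp; ring
    have e2 : p (3 * m + 4) = X * ((X * h - C (b (3 * m)) * f) - C (b (3 * m + 1)) * g).comp (X ^ 3) := by
      rw [show 3 * m + 4 = (3 * m + 1) + 3 by ring, H.h3, hg,
        show 3 * m + 1 + 2 = 3 * m + 3 by ring, e1]; simp; ring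
    have e3 : p (3 * m + 5) = X ^ 2 * ((X * h - C (b (3 * m)) * f) - C (b (3 * m + 1)) * g
        - C (b (3 * m + 2)) * h).comp (X ^ 3) := by
      rw [show 3 * m + 5 = (3 * m + 2) + 3 by ring, H.h3, hh,
        show 3 * m + 2 + 2 = 3 * m + 4 by ring, e2]; simp; ring
    have q1 := mul_pos (H.pos (3 * m)) pf
    have q2 := mul_pos (H.pos (3 * m + 1)) pg
    have q3 := mul_pos (H.pos (3 * m + 2)) ph
    refine ⟨_, _, _, e1, e2, e3, ?_, ?_, ?_⟩ <;> simp [pow_succ] <;> nlinarith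

theorem neg_pos {p : ℕ → ℝ[X]} {b : ℕ → ℝ} (H : Rec p b) (t : ℝ) (ht : 0 < t) (m : ℕ) :
    0 < (-1) ^ m * (p m).eval (-t) ∧ 0 < (-1) ^ (m + 1) * (p (m + 1)).eval (-t) ∧
      0 < (-1) ^ (m + 2) * (p (m + 2)).eval (-t) := by
  induction m with
  | zero => refine ⟨?_, ?_, ?_⟩ <;> simp [H.h0, H.h1, H.h2, ht]
  | succ m ih =>
    obtain ⟨i1, i2, i3⟩ := ih
    refine ⟨i2, i3, ?_⟩
    have q1 := mul_pos (H.pos m) i1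
    have q2 := mul_pos ht i3
    rw [show m + 1 + 2 = m + 3 by ring, H.h3]
    simp only [eval_sub, eval_mul, eval_X, eval_C, pow_succ] at *
    linarith

/-- Nonvanishing when `Im z^3 > 0`, for complex sequences. -/
theorem complex_aux (w : ℕ → ℂ) (b : ℕ → ℝ) (hb : ∀ m, 0 < b m) (z : ℂ) (hz : 0 < (z ^ 3).im)
    (h0 : w 0 = 1) (h1 : w 1 = z) (h2 : w 2 = z ^ 2)
    (h3 : ∀ m, w (m + 3) = z * w (m + 2) - b m * w m) (m : ℕ) :
    0 ≤ (w (m + 1) * star (z * w m)).im ∧ 0 ≤ (z ^ 2 * w (m + 1) * star (w m)).im ∧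
    0 ≤ (w (m + 2) * star (z * w (m + 1))).im ∧ 0 ≤ (z ^ 2 * w (m + 2) * star (w (m + 1))).im ∧
    0 ≤ (w (m + 2) * star (z ^ 2 * w m)).im ∧ 0 ≤ (z * w (m + 2) * star (w m)).im ∧
    w m ≠ 0 ∧ w (m + 1) ≠ 0 ∧ w (m + 2) ≠ 0 := by
  have hz0 : z ≠ 0 := by rintro rfl; simp at hz
  have key : ∀ u : ℂ, (u * star u).im = 0 := by
    intro u; simp [Complex.mul_im]; ring
  have keyre : ∀ u : ℂ, (u * star u).re = Complex.normSq u := by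
    intro u; simp [Complex.mul_re, Complex.normSq_apply]
  induction m with
  | zero =>
    simp only [zero_add, h0, h1, h2]
    refine ⟨?_, ?_, ?_, ?_, ?_, ?_, by simp, hz0, by simp [hz0]⟩
    · simp [mul_comm]
    · rw [star_one, mul_one, ← pow_succ]; exact hz.le
    · rw [show z * z = z ^ 2 from (sq z).symm, key]
    · have : z ^ 2 * z ^ 2 * star z = z ^ 3 * (z * star z) := by ring
      rw [this, Complex.mul_im, key, keyre]
      have := Complex.normSq_nonneg z
      simp; positivity
    · rw [mul_one, key]
    · rw [star_one, mul_one, ← pow_succ']; exact hz.le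
  | succ m ih =>
    obtain ⟨a1, a2, c1, c2, s1, s2, n0, n1, n2⟩ := ih
    have hR1 : (w (m + 3) * star (z * w (m + 2))).im = b m * (z * w (m + 2) * star (w m)).im := by
      rw [h3, sub_mul, Complex.sub_im, key]
      simp [Complex.mul_im, Complex.mul_re]; ring
    have hR2 : (z ^ 2 * w (m + 3) * star (w (m + 2))).im =
        (z ^ 3).im * Complex.normSq (w (m + 2)) + b m * (w (m + 2) * star (z ^ 2 * w m)).im := by
      rw [h3, show z ^ 2 * (z * w (m + 2) - b m * w m) * star (w (m + 2)) =
        z ^ 3 * (w (m + 2) * star (w (m + 2))) - b m * (z ^ 2 * w m * star (w (m + 2))) by ring,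
        Complex.sub_im, Complex.mul_im (z ^ 3), key, keyre]
      simp [Complex.mul_im, Complex.mul_re, sq]; ring
    have hS1 : (w (m + 3) * star (z ^ 2 * w (m + 1))).im =
        Complex.normSq z * (w (m + 2) * star (z * w (m + 1))).im
          + b m * (z ^ 2 * w (m + 1) * star (w m)).im := by
      rw [h3, star_mul, star_pow, show (z * w (m + 2) - b m * w m) * (star (w (m + 1)) * star z ^ 2) =
        (z * star z) * (w (m + 2) * (star (w (m + 1)) * star z)) -
          b m * (w m * (star (w (m + 1)) * star z ^ 2)) by ring,
        Complex.sub_im, Complex.mul_im (z * star z), key, keyre, ← star_mul, ← star_pow, ← star_mul]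
      simp [Complex.mul_im, Complex.mul_re, sq]; ring
    have hS2 : (z * w (m + 3) * star (w (m + 1))).im =
        (z ^ 2 * w (m + 2) * star (w (m + 1))).im + b m * (w (m + 1) * star (z * w m)).im := by
      rw [h3, show z * (z * w (m + 2) - b m * w m) * star (w (m + 1)) =
        z ^ 2 * w (m + 2) * star (w (m + 1)) - b m * (z * w m * star (w (m + 1))) by ring,
        Complex.sub_im]
      simp [Complex.mul_im, Complex.mul_re, sq]; ring
    have bp := hb m
    have np : 0 < Complex.normSq (w (m + 2)) := Complex.normSq_pos.2 n2
    have np' := Complex.normSq_nonneg z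
    have hR2p : 0 < (z ^ 2 * w (m + 3) * star (w (m + 2))).im := by rw [hR2]; positivity
    refine ⟨c1, c2, ?_, hR2p.le, ?_, ?_, n1, n2, ?_⟩
    · rw [show m + 1 + 2 = m + 3 by ring, hR1]; positivity
    · rw [show m + 1 + 2 = m + 3 by ring, hS1]; positivity
    · rw [show m + 1 + 2 = m + 3 by ring, hS2]; positivity
    · intro h
      rw [show m + 1 + 2 = m + 3 by ring] at h
      rw [h] at hR2p; simp at hR2p

/-- Values `w` and derivatives `d` at a positive real point. -/
theorem real_aux (w d : ℕ → ℝ) (b : ℕ → ℝ) (hb : ∀ m, 0 < b m) (t : ℝ) (ht : 0 < t)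
    (h0 : w 0 = 1) (h1 : w 1 = t) (h2 : w 2 = t ^ 2)
    (d0 : d 0 = 0) (d1 : d 1 = 1) (d2 : d 2 = 2 * t)
    (h3 : ∀ m, w (m + 3) = t * w (m + 2) - b m * w m)
    (d3 : ∀ m, d (m + 3) = w (m + 2) + t * d (m + 2) - b m * d m) (m : ℕ) :
    0 ≤ t * (d (m + 1) * w m - w (m + 1) * d m) - w (m + 1) * w m ∧
    0 ≤ t * (d (m + 1) * w m - w (m + 1) * d m) + 2 * (w (m + 1) * w m) ∧
    0 ≤ t * (d (m + 2) * w (m + 1) - w (m + 2) * d (m + 1)) - w (m + 2) * w (m + 1) ∧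
    0 ≤ t * (d (m + 2) * w (m + 1) - w (m + 2) * d (m + 1)) + 2 * (w (m + 2) * w (m + 1)) ∧
    0 ≤ t * (d (m + 2) * w m - w (m + 2) * d m) - 2 * (w (m + 2) * w m) ∧
    0 ≤ t * (d (m + 2) * w m - w (m + 2) * d m) + w (m + 2) * w m ∧
    (w m = 0 → w (m + 1) = 0 → w (m + 2) = 0 → False) := by
  induction m with
  | zero =>
    simp only [zero_add, h0, h1, h2, d0, d1, d2]
    refine ⟨?_, ?_, ?_, ?_, ?_, ?_, by simp⟩ <;> ring_nf <;> positivity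
  | succ m ih =>
    obtain ⟨a1, a2, c1, c2, s1, s2, n0⟩ := ih
    have bp := hb m
    rw [show m + 1 + 2 = m + 3 by ring, show m + 1 + 1 = m + 2 by ring, h3, d3]
    refine ⟨c1, c2, ?_, ?_, ?_, ?_, ?_⟩
    · have := mul_nonneg bp.le s2; linarith
    · have := mul_nonneg bp.le s1
      have : 0 ≤ t * w (m + 2) ^ 2 := by positivity
      linarith
    · have := mul_nonneg bp.le a2
      have := mul_nonneg ht.le c1
      linarith
    · have := mul_nonneg bp.le a1
      have := mul_nonneg ht.le c2
      linarith
    · intro e1 e2 e3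
      rw [e2] at e3
      have : w m = 0 := by
        have : b m * w m = 0 := by linarith
        rcases mul_eq_zero.1 this with h | h
        · exact absurd h bp.ne'
        · exact h
      exact n0 this e1 e2

theorem real_simple (w d : ℕ → ℝ) (b : ℕ → ℝ) (hb : ∀ m, 0 < b m) (t : ℝ) (ht : 0 < t)
    (h0 : w 0 = 1) (h1 : w 1 = t) (h2 : w 2 = t ^ 2)
    (d0 : d 0 = 0) (d1 : d 1 = 1) (d2 : d 2 = 2 * t)
    (h3 : ∀ m, w (m + 3) = t * w (m + 2) - b m * w m)
    (d3 : ∀ m, d (m + 3) = w (m + 2) + t * d (m + 2) - b m * d m) (m : ℕ) :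
    w m = 0 → d m = 0 → False := by
  have AUX := real_aux w d b hb t ht h0 h1 h2 d0 d1 d2 h3 d3
  induction m using Nat.strong_induction_on with
  | _ m ih =>
    match m, ih with
    | 0, _ => intro h; simp [h0] at h
    | 1, _ => intro h; rw [h1] at h; exact absurd h ht.ne'
    | 2, _ => intro h; rw [h2] at h; exact absurd h (by positivity)
    | m + 3, ih =>
      intro hw hd
      obtain ⟨a1, a2, c1, c2, s1, s2, n0⟩ := AUX m
      obtain ⟨a1', a2', c1', c2', s1', s2', n0'⟩ := AUX (m + 1)
      have e := h3 m
      have e' := d3 m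
      have bp := hb m
      have r1 := mul_nonneg bp.le s1
      have r2 := mul_nonneg bp.le s2
      have hw2 : w (m + 2) = 0 := by
        have hbw : b m * w m = t * w (m + 2) := by linarith
        have hbd : b m * d m = w (m + 2) + t * d (m + 2) := by linarith
        have : t * w (m + 2) ^ 2 ≤ 0 := by
          have q1 : b m * (t * (d (m + 2) * w m - w (m + 2) * d m) - 2 * (w (m + 2) * w m)) =
            t * (d (m + 2) * (b m * w m) - w (m + 2) * (b m * d m)) - 2 * (w (m + 2) * (b m * w m)) := by ring
          rw [q1, hbw, hbd] at r1
          nlinarith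
        have : w (m + 2) ^ 2 ≤ 0 := by
          by_contra hc
          push Not at hc
          have := mul_pos ht hc
          linarith
        exact pow_eq_zero_iff (two_ne_zero) |>.1 (le_antisymm this (sq_nonneg _))
      have hwm : w m = 0 := by
        rw [hw, hw2] at e
        have : b m * w m = 0 := by linarith
        exact (mul_eq_zero.1 this).resolve_left bp.ne'
      refine ih m (by omega) hwm ?_
      have hw1 : w (m + 1) ≠ 0 := fun h => n0 hwm h hw2
      match m with
      | 0 => exact absurd hwm (by simp [h0])
      | k + 1 =>
        obtain ⟨-, a2, c1, -, -, -, -⟩ := AUX k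
        have bp := hb k
        have e := h3 k
        rw [show k + 1 + 2 = k + 3 by ring] at hw2
        rw [hw2] at e
        have hw1' : w (k + 2) ≠ 0 := hw1
        rw [hwm] at a2 c1
        have q1 : 0 ≤ t * -(w (k + 2) * d (k + 1)) := by linarith
        have q2 : 0 ≤ t * (d (k + 1) * w k) := by linarith
        have q3 := nonneg_of_mul_nonneg_right q1 ht
        have q4 := nonneg_of_mul_nonneg_right q2 ht
        have q5 := mul_nonneg bp.le q4
        have q6 : 0 ≤ t * (w (k + 2) * d (k + 1)) := by
          have : b k * (d (k + 1) * w k) = d (k + 1) * (b k * w k) := by ring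
          rw [this, show b k * w k = t * w (k + 2) by linarith] at q5
          linarith
        have q7 := nonneg_of_mul_nonneg_right q6 ht
        have : w (k + 2) * d (k + 1) = 0 := by linarith
        exact (mul_eq_zero.1 this).resolve_left hw1'
end Tar
namespace Tar
noncomputable def ent (u v : ℕ → ℝ) (i j : ℕ) : ℝ[X] :=
  if i = j then X else if j = i + 1 then -C (u i) else if i = j + 2 then -C (v j) else 0

theorem ent_zero (u v : ℕ → ℝ) (i j : ℕ) (h1 : i ≠ j) (h2 : j ≠ i + 1) (h3 : i ≠ j + 2) :
    ent u v i j = 0 := by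
  rw [ent, if_neg h1, if_neg h2, if_neg h3]

noncomputable def mat (u v : ℕ → ℝ) (m : ℕ) : Matrix (Fin m) (Fin m) ℝ[X] :=
  Matrix.of fun i j => ent u v (m - 1 - i) (m - 1 - j)

noncomputable def pp (u v : ℕ → ℝ) (m : ℕ) : ℝ[X] := (mat u v m).det

theorem pp_rec (u v : ℕ → ℝ) (m : ℕ) : pp u v (m + 3) =
    X * pp u v (m + 2) - C (u (m + 1) * u m * v m) * pp u v m := by
  unfold pp
  rw [Matrix.det_succ_column_zero, Fin.sum_univ_succ, Fin.sum_univ_succ, Finset.sum_eq_zero]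
  · have h1 : (mat u v (m + 3)).submatrix (Fin.succAbove 0) Fin.succ = mat u v (m + 2) := by
      ext1 i j
      simp only [mat, Matrix.submatrix_apply, Matrix.of_apply, Fin.zero_succAbove, Fin.val_succ]
      congr 1 <;> omega
    have h2 : ((mat u v (m + 3)).submatrix (Fin.succAbove (Fin.succ 0)) Fin.succ).det =
        C (v m) * (- C (u m) * (mat u v m).det) := by
      rw [Matrix.det_succ_row_zero, Fin.sum_univ_succ, Fin.sum_univ_succ, Finset.sum_eq_zero]
      · have h4 : (((mat u v (m + 3)).submatrix (Fin.succAbove (Fin.succ 0)) Fin.succ).submatrix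
              Fin.succ (Fin.succAbove (Fin.succ 0))).det = - C (u m) * (mat u v m).det := by
          rw [Matrix.det_succ_column_zero (n := m), Fin.sum_univ_succ, Finset.sum_eq_zero]
          · have h3 : (((((mat u v (m + 3)).submatrix (Fin.succAbove (Fin.succ 0)) Fin.succ).submatrix
                Fin.succ (Fin.succAbove (Fin.succ 0)))).submatrix (Fin.succAbove 0) Fin.succ)
                = mat u v m := by
              ext1 i j
              simp only [mat, Matrix.submatrix_apply, Matrix.of_apply, Fin.zero_succAbove,
                Fin.succ_succAbove_succ, Fin.val_succ]
              congr 1 <;> omega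
            have e3 : (mat u v (m + 3)) ((Fin.succ 0 : Fin (m + 3)).succAbove (Fin.succ 0))
                (Fin.succ ((Fin.succ 0 : Fin (m + 2)).succAbove 0)) = - C (u m) := by
              have : 2 % (m + 3) = 2 := Nat.mod_eq_of_lt (by omega)
              simp [mat, ent, this]
            rw [h3, add_zero]
            congr 1
            rw [Matrix.submatrix_apply, Matrix.submatrix_apply, e3]
            simp
          · intro i _
            have : ((mat u v (m + 3)).submatrix (Fin.succAbove (Fin.succ 0)) Fin.succ).submatrix
                Fin.succ (Fin.succAbove (Fin.succ 0)) i.succ 0 = 0 := by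
              have := i.2
              simp only [mat, Matrix.submatrix_apply, Matrix.of_apply, Fin.succ_succAbove_succ,
                Fin.zero_succAbove, Fin.succ_succAbove_zero, Fin.val_succ, Fin.val_zero]
              exact ent_zero _ _ _ _ (by omega) (by omega) (by omega)
            rw [this]; simp
        have e1 : (mat u v (m + 3)) ((Fin.succ 0 : Fin (m + 3)).succAbove 0) (Fin.succ 0) = 0 := by
          simp [mat, ent]
        have e2 : (mat u v (m + 3)) ((Fin.succ 0 : Fin (m + 3)).succAbove 0) (Fin.succ (Fin.succ 0))
            = - C (v m) := by
          have : 2 % (m + 3) = 2 := Nat.mod_eq_of_lt (by omega)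
          simp [mat, ent, this]
          intro h; omega
        rw [h4, Matrix.submatrix_apply, Matrix.submatrix_apply, e1, e2]
        simp
      · intro i _
        have : (mat u v (m + 3)).submatrix (Fin.succAbove (Fin.succ 0)) Fin.succ 0 i.succ.succ = 0 := by
          have := i.2
          simp only [mat, Matrix.submatrix_apply, Matrix.of_apply, Fin.succ_succAbove_succ,
              Fin.zero_succAbove, Fin.succ_succAbove_zero, Fin.val_succ, Fin.val_zero]
          exact ent_zero _ _ _ _ (by omega) (by omega) (by omega)
        rw [this]; simp
    rw [h1, h2]
    have e1 : mat u v (m + 3) 0 0 = X := by simp [mat, ent]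
    have e2 : mat u v (m + 3) (Fin.succ 0) 0 = - C (u (m + 1)) := by simp [mat, ent]
    rw [e1, e2]
    simp
    ring
  · intro i _
    have : mat u v (m + 3) i.succ.succ 0 = 0 := by
      have := i.2
      simp only [mat, Matrix.of_apply, Fin.val_succ, Fin.val_zero]
      exact ent_zero _ _ _ _ (by omega) (by omega) (by omega)
    rw [this]; simp

theorem pp0 (u v : ℕ → ℝ) : pp u v 0 = 1 := by simp [pp]
theorem pp1 (u v : ℕ → ℝ) : pp u v 1 = X := by simp [pp, mat, ent]
theorem pp2 (u v : ℕ → ℝ) : pp u v 2 = X ^ 2 := by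
  simp [pp, mat, ent, Matrix.det_fin_two, sq]

theorem charpoly_eq (n : ℕ) (A : Matrix (Fin n) (Fin n) ℝ) (u v : ℕ → ℝ)
    (hu : ∀ i j : Fin n, (j : ℕ) = (i : ℕ) + 1 → A i j = u i)
    (hv : ∀ i j : Fin n, (i : ℕ) = (j : ℕ) + 2 → A i j = v j)
    (hzero : ∀ i j : Fin n, (j : ℕ) ≠ (i : ℕ) + 1 → (i : ℕ) ≠ (j : ℕ) + 2 → A i j = 0) :
    A.charpoly = pp u v n := by
  rw [pp, Matrix.charpoly, ← Matrix.det_submatrix_equiv_self Fin.revPerm]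
  congr 1
  ext1 i j
  have hi : ((Fin.rev i : Fin n) : ℕ) = n - 1 - i := by rw [Fin.val_rev]; omega
  have hj : ((Fin.rev j : Fin n) : ℕ) = n - 1 - j := by rw [Fin.val_rev]; omega
  simp only [mat, Matrix.submatrix_apply, Fin.revPerm_apply, Matrix.of_apply, ← hi, ← hj]
  generalize Fin.rev i = a
  generalize Fin.rev j = c
  rw [Matrix.charmatrix_apply, ent]
  by_cases h : a = c
  · subst h
    rw [hzero a a (by omega) (by omega)]; simp
  · have h' : (a : ℕ) ≠ c := fun e => h (Fin.ext e)
    rw [if_neg h', Matrix.diagonal_apply_ne _ h]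
    split_ifs with h1 h2
    · rw [hu a c h1]; simp
    · rw [hv a c h2]; simp
    · rw [hzero a c h1 h2]; simp
end Tar
namespace Tar

theorem main_aux {p : ℕ → ℝ[X]} {b : ℕ → ℝ} (H : Rec p b) (n : ℕ) :
    (∃ k : ℕ, k ≤ 2 ∧ ∃ P : Polynomial ℝ, p n = X ^ k * P.comp (X ^ 3) ∧
      ∀ x : ℝ, P.IsRoot x → 0 < x ∧ P.rootMultiplicity x = 1) ∧
    (∀ z : ℂ, ((p n).map (algebraMap ℝ ℂ)).IsRoot z → z ≠ 0 →
      ((p n).map (algebraMap ℝ ℂ)).rootMultiplicity z = 1 ∧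
      (z.arg = 0 ∨ z.arg = 2 * Real.pi / 3 ∨ z.arg = -(2 * Real.pi / 3))) := by
  obtain ⟨k, hk, P, hP, hP0⟩ : ∃ k : ℕ, k ≤ 2 ∧ ∃ P : ℝ[X], p n = X ^ k * P.comp (X ^ 3) ∧
      P.eval 0 ≠ 0 := by
    obtain ⟨f, g, h, hf, hg, hh, pf, pg, ph⟩ := exists_comp H (n / 3)
    have hn : n = 3 * (n / 3) ∨ n = 3 * (n / 3) + 1 ∨ n = 3 * (n / 3) + 2 := by omega
    rcases hn with e | e | e
    · exact ⟨0, by norm_num, f, by rw [e, hf]; simp, right_ne_zero_of_mul pf.ne'⟩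
    · exact ⟨1, by norm_num, g, by rw [e, hg]; simp, right_ne_zero_of_mul pg.ne'⟩
    · exact ⟨2, by norm_num, h, by rw [e, hh], right_ne_zero_of_mul ph.ne'⟩
  have hPne : P ≠ 0 := by rintro rfl; simp at hP0
  -- real facts
  have hev : ∀ t : ℝ, (p n).eval t = t ^ k * P.eval (t ^ 3) := by
    intro t; rw [hP]; simp [eval_comp]
  have hpos : ∀ x : ℝ, P.eval x = 0 → 0 < x := by
    intro x hx
    by_contra hc
    rcases eq_or_lt_of_le (not_lt.1 hc) with h | h
    · rw [h] at hx; exact hP0 hx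
    · have ht : 0 < (-x) ^ ((1 : ℝ) / 3) := Real.rpow_pos_of_pos (by linarith) _
      have h3 : ((-x) ^ ((1 : ℝ) / 3)) ^ 3 = -x := by
        rw [← Real.rpow_natCast, ← Real.rpow_mul (by linarith)]; norm_num
      have := (neg_pos H _ ht n).1
      rw [hev, show (-(-x) ^ ((1 : ℝ) / 3)) ^ 3 = -(((-x) ^ ((1 : ℝ) / 3)) ^ 3) by ring, h3,
        neg_neg, hx] at this
      simp at this
  have hder : ∀ x : ℝ, P.eval x = 0 → P.derivative.eval x ≠ 0 := by
    intro x hx hd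
    have hx0 := hpos x hx
    have ht : 0 < x ^ ((1 : ℝ) / 3) := Real.rpow_pos_of_pos hx0 _
    have h3 : (x ^ ((1 : ℝ) / 3)) ^ 3 = x := by
      rw [← Real.rpow_natCast, ← Real.rpow_mul hx0.le]; norm_num
    generalize x ^ ((1 : ℝ) / 3) = t at ht h3
    refine real_simple (fun m => (p m).eval t) (fun m => (p m).derivative.eval t) b H.pos t ht
      (by simp [H.h0]) (by simp [H.h1]) (by simp [H.h2]) (by simp [H.h0]) (by simp [H.h1])
      (by simp [H.h2]; left; norm_num) (fun m => by simp [H.h3]) (fun m => by simp [H.h3]) n ?_ ?_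
    · simp only [hev, h3, hx, mul_zero]
    · simp only [hP, derivative_mul, derivative_comp, eval_add, eval_mul, eval_comp, eval_pow,
        eval_X, h3, hx, hd, mul_zero, add_zero]
  have mult : ∀ {K : Type} [Field K] (q : K[X]) (x : K), q.eval x = 0 → q.derivative.eval x ≠ 0 →
      q.rootMultiplicity x = 1 := by
    intro K _ q x h1 h2
    have hq : q ≠ 0 := by rintro rfl; simp at h2
    have a1 : 0 < q.rootMultiplicity x := (rootMultiplicity_pos hq).2 h1
    have a2 : ¬ 1 < q.rootMultiplicity x := by
      rw [one_lt_rootMultiplicity_iff_isRoot hq]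
      exact fun h => h2 h.2
    omega
  refine ⟨⟨k, hk, P, hP, fun x hx => ⟨hpos x hx, mult P x hx (hder x hx)⟩⟩, ?_⟩
  intro z hz hz0
  -- complex nonvanishing
  have nonv : ∀ y : ℂ, 0 < (y ^ 3).im → ((p n).map (algebraMap ℝ ℂ)).eval y ≠ 0 := by
    intro y hy
    exact (complex_aux (fun m => ((p m).map (algebraMap ℝ ℂ)).eval y) b H.pos y hy
      (by simp [H.h0]) (by simp [H.h1]) (by simp [H.h2])
      (fun m => by simp [H.h3]) n).2.2.2.2.2.2.1
  have hmapP : (p n).map (algebraMap ℝ ℂ) =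
      X ^ k * (P.map (algebraMap ℝ ℂ)).comp (X ^ 3) := by
    rw [hP]; simp [Polynomial.map_comp]
  have hconj : ((p n).map (algebraMap ℝ ℂ)).eval (star z) = 0 := by
    have h := congrArg (starRingEnd ℂ) (show ((p n).map (algebraMap ℝ ℂ)).eval z = 0 from hz)
    rw [eval_map_algebraMap, ← aeval_conj, map_zero] at h
    rw [eval_map_algebraMap]; exact h
  have him : (z ^ 3).im = 0 := by
    rcases lt_trichotomy (z ^ 3).im 0 with h | h | h
    · refine absurd hconj (nonv _ ?_)
      rw [← star_pow, Complex.star_def, Complex.conj_im]; linarith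
    · exact h
    · exact absurd hz (nonv z h)
  have hre : z ^ 3 = ((z ^ 3).re : ℂ) := by apply Complex.ext <;> simp [him]
  have hroot : P.eval (z ^ 3).re = 0 := by
    have h : ((p n).map (algebraMap ℝ ℂ)).eval z = 0 := hz
    rw [hmapP] at h
    simp only [eval_mul, eval_pow, eval_X, eval_comp] at h
    have h' := (mul_eq_zero.1 h).resolve_left (pow_ne_zero _ hz0)
    rw [hre] at h'
    have e : (P.map (algebraMap ℝ ℂ)).eval (((z ^ 3).re : ℝ) : ℂ) = ((P.eval (z ^ 3).re : ℝ) : ℂ) :=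
      eval_map_apply (algebraMap ℝ ℂ) _
    rw [e] at h'
    exact_mod_cast h'
  have hxpos := hpos _ hroot
  constructor
  · refine mult _ _ hz ?_
    have e0 : (P.map (algebraMap ℝ ℂ)).eval (z ^ 3) = 0 := by
      rw [hre]
      have := eval_map_apply (p := P) (algebraMap ℝ ℂ) (z ^ 3).re
      rw [hroot, map_zero] at this
      exact this
    have e1 : (P.map (algebraMap ℝ ℂ)).derivative.eval (z ^ 3) ≠ 0 := by
      rw [hre, derivative_map]
      have := eval_map_apply (p := P.derivative) (algebraMap ℝ ℂ) (z ^ 3).re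
      intro h
      have h2 := this.symm.trans h
      exact hder _ hroot (by simpa using h2)
    rw [hmapP]
    simp only [derivative_mul, derivative_comp, eval_add, eval_mul, eval_comp, eval_pow,
        eval_X, e0, mul_zero, zero_add, derivative_X_pow]
    refine mul_ne_zero (pow_ne_zero _ hz0) (mul_ne_zero ?_ e1)
    simp [hz0]
  · -- argument
    have hzre : z = (z.re : ℂ) + z.im * Complex.I := (Complex.re_add_im z).symm
    have him' : z.im * (3 * z.re ^ 2 - z.im ^ 2) = 0 := by
      rw [← him]; simp [pow_succ, Complex.mul_im, Complex.mul_re]; ring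
    have hre' : 0 < z.re * (z.re ^ 2 - 3 * z.im ^ 2) := by
      refine hxpos.trans_eq ?_
      simp [pow_succ, Complex.mul_im, Complex.mul_re]; ring
    have s3 : Real.sqrt 3 ^ 2 = 3 := Real.sq_sqrt (by norm_num)
    have c23 : Real.cos (2 * Real.pi / 3) = - (1 / 2) := by
      rw [show 2 * Real.pi / 3 = Real.pi - Real.pi / 3 by ring, Real.cos_pi_sub, Real.cos_pi_div_three]
    have s23 : Real.sin (2 * Real.pi / 3) = Real.sqrt 3 / 2 := by
      rw [show 2 * Real.pi / 3 = Real.pi - Real.pi / 3 by ring, Real.sin_pi_sub, Real.sin_pi_div_three]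
    have pp := Real.pi_pos
    rcases mul_eq_zero.1 him' with h | h
    · left
      rw [h] at hre'
      have : 0 < z.re := by
        by_contra hc
        push Not at hc
        have := mul_nonneg (neg_nonneg.2 hc) (sq_nonneg z.re)
        linarith
      rw [Complex.arg_eq_zero_iff]
      exact ⟨this.le, h⟩
    · right
      have hneg : z.re < 0 := by
        by_contra hc
        push Not at hc
        have := mul_nonneg hc (sq_nonneg z.re)
        have e : z.im ^ 2 = 3 * z.re ^ 2 := by linarith
        rw [e] at hre'
        linarith
      have hf : (z.im - Real.sqrt 3 * z.re) * (z.im + Real.sqrt 3 * z.re) = 0 := by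
        have : (z.im - Real.sqrt 3 * z.re) * (z.im + Real.sqrt 3 * z.re) =
          z.im ^ 2 - Real.sqrt 3 ^ 2 * z.re ^ 2 := by ring
        rw [this, s3]; linarith
      rcases mul_eq_zero.1 hf with g | g
      · right
        have : z = ((-2 * z.re : ℝ) : ℂ) * (Complex.cos ((-(2 * Real.pi / 3) : ℝ) : ℂ) +
            Complex.sin ((-(2 * Real.pi / 3) : ℝ) : ℂ) * Complex.I) := by
          rw [← Complex.ofReal_cos, ← Complex.ofReal_sin, Real.cos_neg, Real.sin_neg, c23, s23]
          apply Complex.ext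
          · simp; ring
          · simp; linarith
        rw [this]
        exact Complex.arg_mul_cos_add_sin_mul_I (by linarith) ⟨by linarith, by linarith⟩
      · left
        have : z = ((-2 * z.re : ℝ) : ℂ) * (Complex.cos (((2 * Real.pi / 3) : ℝ) : ℂ) +
            Complex.sin (((2 * Real.pi / 3) : ℝ) : ℂ) * Complex.I) := by
          rw [← Complex.ofReal_cos, ← Complex.ofReal_sin, c23, s23]
          apply Complex.ext
          · simp; ring
          · simp; linarith
        rw [this]
        exact Complex.arg_mul_cos_add_sin_mul_I (by linarith) ⟨by linarith, by linarith⟩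

end Tar


/-- For a real n×n matrix with positive entries on the first superdiagonal and
the second subdiagonal and zeros elsewhere, the characteristic polynomial has
the form λ^k · P(λ³) with k ∈ {0,1,2}, where P is a real polynomial all of whose
roots are positive and simple. In particular, all nonzero eigenvalues are simple
with arguments of the form 2πk/3, k ∈ {0,1,2}. -/
theorem tarasov_charpoly (n : ℕ) (A : Matrix (Fin n) (Fin n) ℝ)
    (hsup : ∀ i j : Fin n, (j : ℕ) = (i : ℕ) + 1 → 0 < A i j)
    (hsub : ∀ i j : Fin n, (i : ℕ) = (j : ℕ) + 2 → 0 < A i j)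
    (hzero : ∀ i j : Fin n, (j : ℕ) ≠ (i : ℕ) + 1 → (i : ℕ) ≠ (j : ℕ) + 2 → A i j = 0) :
    (∃ k : ℕ, k ≤ 2 ∧ ∃ P : Polynomial ℝ, A.charpoly = X ^ k * P.comp (X ^ 3) ∧
      ∀ x : ℝ, P.IsRoot x → 0 < x ∧ P.rootMultiplicity x = 1) ∧
    (∀ z : ℂ, (A.charpoly.map (algebraMap ℝ ℂ)).IsRoot z → z ≠ 0 →
      (A.charpoly.map (algebraMap ℝ ℂ)).rootMultiplicity z = 1 ∧
      (z.arg = 0 ∨ z.arg = 2 * Real.pi / 3 ∨ z.arg = -(2 * Real.pi / 3))) := by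
  
  classical
  let u : ℕ → ℝ := fun i => if h : i + 1 < n then A ⟨i, by omega⟩ ⟨i + 1, h⟩ else 1
  let v : ℕ → ℝ := fun j => if h : j + 2 < n then A ⟨j + 2, h⟩ ⟨j, by omega⟩ else 1
  have up : ∀ i, 0 < u i := by
    intro i
    by_cases h : i + 1 < n
    · simp only [u, dif_pos h]; exact hsup _ _ rfl
    · simp only [u, dif_neg h]; norm_num
  have vp : ∀ i, 0 < v i := by
    intro i
    by_cases h : i + 2 < n
    · simp only [v, dif_pos h]; exact hsub _ _ rfl
    · simp only [v, dif_neg h]; norm_num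
  have H : Tar.Rec (Tar.pp u v) (fun m => u (m + 1) * u m * v m) :=
    ⟨fun m => mul_pos (mul_pos (up _) (up _)) (vp _), Tar.pp0 u v, Tar.pp1 u v, Tar.pp2 u v,
      Tar.pp_rec u v⟩
  have e : A.charpoly = Tar.pp u v n := by
    apply Tar.charpoly_eq n A u v _ _ hzero
    · intro i j h
      have hj := j.2
      have : (i : ℕ) + 1 < n := by omega
      simp only [u, dif_pos this]
      congr 1
      exact Fin.ext h
    · intro i j h
      have hi := i.2
      have : (j : ℕ) + 2 < n := by omega
      simp only [v, dif_pos this]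
      congr 1
      exact Fin.ext h
  rw [e]
  exact Tar.main_aux H n
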